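/- Under hypotheses (H0)–(H3), if ψ: E→ℝ is Lipschitz with ⟨ψ,μ*⟩=0, then the strong law of large numbers holds: (1/n) Σ_{i=1}^n ψ(X_i) → 0 P_μ-almost surely as n → ∞. -/

import Mathlib

open MeasureTheory ProbabilityTheory Filter Bornology
open scoped ENNReal NNReal Topology

variable {E : Type*} [MeasurableSpace E] [MetricSpace E] [CompleteSpace E]
  [SecondCountableTopology E] [BorelSpace E]

/-- The Markov operator acting on functions: `Pf(x) = ∫ f(y) π(x, dy)`. -/
noncomputable def Pfun (π : Kernel E E) (f : E → ℝ) : E → ℝ := fun x => ∫ y, f y ∂(π x)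

/-- The Markov operator acting on measures (the transfer operator `ν ↦ νP`). -/
noncomputable def Pmeas (π : Kernel E E) (ν : MeasureTheory.Measure E) :
    MeasureTheory.Measure E := ν.bind (fun x => π x)

/-- `ν ∈ M_{1,1}`: a Borel probability measure with finite first moment. -/
def FiniteFirstMoment (ν : MeasureTheory.Measure E) : Prop :=
  IsProbabilityMeasure ν ∧ ∃ x₀ : E, Integrable (fun x => dist x₀ x) ν

/-- The Wasserstein (dual-Lipschitz) distance between two measures. -/
noncomputable def wassDist (ν₁ ν₂ : MeasureTheory.Measure E) : ℝ :=
  sSup {r : ℝ | ∃ f : E → ℝ, LipschitzWith 1 f ∧ r = |∫ x, f x ∂ν₁ - ∫ x, f x ∂ν₂|}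

/-- The natural filtration of the coordinate process on `ℕ → E`. -/
def natFilt : Filtration ℕ (MeasurableSpace.pi : MeasurableSpace (ℕ → E)) :=
  Filtration.natural (fun k (ω : ℕ → E) => ω k)
    (fun k => (measurable_pi_apply k).stronglyMeasurable)

/-- `ℙ` is the law of the Markov chain on `E^ℕ` with transition probability `π` and
initial distribution `ν`. -/
structure IsMarkovChainLaw (π : Kernel E E) (ν : MeasureTheory.Measure E)
    (P : MeasureTheory.Measure (ℕ → E)) : Prop where
  prob : IsProbabilityMeasure P
  init : P.map (fun ω => ω 0) = ν
  markov : ∀ (n : ℕ) (g : E → ℝ), Measurable g → IsBounded (Set.range g) →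
    P[(fun ω => g (ω (n + 1))) | natFilt n] =ᵐ[P] fun ω => ∫ y, g y ∂(π (ω n))

/-- The corrector function `χ = ∑_{i≥0} Pⁱψ`. -/
noncomputable def chiFun (π : Kernel E E) (ψ : E → ℝ) : E → ℝ :=
  fun x => ∑' i : ℕ, (Pfun π)^[i] ψ x

/-- The martingale `S_n = χ(X_n) - χ(X_0) + ∑_{i=0}^n ψ(X_i)` as a function of the trajectory. -/
noncomputable def SFun (π : Kernel E E) (ψ : E → ℝ) (n : ℕ) : (ℕ → E) → ℝ :=
  fun ω => chiFun π ψ (ω n) - chiFun π ψ (ω 0) + ∑ i ∈ Finset.range (n + 1), ψ (ω i)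

/-- The martingale differences `Z_n = χ(X_n) - χ(X_{n-1}) + ψ(X_n)`. -/
noncomputable def ZFun (π : Kernel E E) (ψ : E → ℝ) (n : ℕ) : (ℕ → E) → ℝ :=
  fun ω => chiFun π ψ (ω n) - chiFun π ψ (ω (n - 1)) + ψ (ω n)

/-!
Contraction in the Wasserstein distance makes the Lipschitz constants of `Pⁿψ` summable; as `Pⁿψ`
has `μ*`-mean zero, this makes `∑ Pⁿψ` converge to a Lipschitz corrector `χ` solving the Poisson
equation `χ - Pχ = ψ`. By the Markov property `∑_{k<n} ψ(X_k)` is then the boundary term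
`χ(X_0) - χ(X_n)` plus a sum of martingale differences `χ(X_{k+1}) - E[χ(X_{k+1}) | X_0, …, X_k]`
bounded in `L²`. Divided by `k + 1`, these sum to an `L²`-bounded martingale, which converges almost
surely, so Kronecker's lemma gives `o(n)`. The boundary term is also `o(n)`, because
`∑ E χ(X_n)² / (n + 1)² < ∞`.
-/

section Asymptotics

open Asymptotics Finset

variable {F : Type*} [NormedAddCommGroup F]

lemma isLittleO_const_of_tendsto_atTop {α : Type*} {l : Filter α} {b : α → ℝ}
    (hb : Tendsto b l atTop) (c : F) : (fun _ => c) =o[l] b :=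
  isLittleO_const_left.2 (.inr (tendsto_norm_atTop_atTop.comp hb))

lemma natCast_add_one_isBigO : (fun n : ℕ => (n : ℝ) + 1) =O[atTop] fun n => (n : ℝ) :=
  (isBigO_refl _ _).add (isLittleO_const_of_tendsto_atTop tendsto_natCast_atTop_atTop 1).isBigO

variable [NormedSpace ℝ F]

lemma sum_range_smul_by_parts (b : ℕ → ℝ) (z : ℕ → F) (l : F) (n : ℕ) :
    ∑ k ∈ range n, b k • z k = b n • (∑ k ∈ range n, z k - l) + b 0 • l -
      ∑ k ∈ range n, (b (k + 1) - b k) • (∑ j ∈ range (k + 1), z j - l) := by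
  induction n with
  | zero => simp
  | succ n ih =>
    simp only [sum_range_succ _ n, ih]
    module

theorem kronecker_isLittleO {b : ℕ → ℝ} {z : ℕ → F} {l : F} (hb : Monotone b)
    (hb_top : Tendsto b atTop atTop)
    (hz : Tendsto (fun n => ∑ k ∈ range n, z k) atTop (𝓝 l)) :
    (fun n => ∑ k ∈ range n, b k • z k) =o[atTop] b := by
  have tail_isLittleO : (fun n => ∑ k ∈ range n, z k - l) =o[atTop] (fun _ => (1 : ℝ)) :=
    (isLittleO_one_iff ℝ).2 (tendsto_sub_nhds_zero_iff.2 hz)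
  have boundary : (fun n => b n • (∑ k ∈ range n, z k - l)) =o[atTop] b := by
    simpa using (isBigO_refl b atTop).smul_isLittleO tail_isLittleO
  have increments : (fun n => ∑ k ∈ range n,
      (b (k + 1) - b k) • (∑ j ∈ range (k + 1), z j - l)) =o[atTop] fun n => b n - b 0 := by
    have h : (fun k => (b (k + 1) - b k) • (∑ j ∈ range (k + 1), z j - l)) =o[atTop]
        fun k => b (k + 1) - b k := by
      simpa using (isBigO_refl (fun k => b (k + 1) - b k) atTop).smul_isLittleO
        (tail_isLittleO.comp_tendsto (tendsto_add_atTop_nat 1))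
    simpa only [sum_range_sub] using h.sum_range (fun k => sub_nonneg.2 (hb k.le_succ))
      (by simp only [sum_range_sub]; exact tendsto_atTop_add_const_right _ (-b 0) hb_top)
  simp only [sum_range_smul_by_parts b z l]
  exact (boundary.add (isLittleO_const_of_tendsto_atTop hb_top _)).sub
    (increments.trans_isBigO ((isBigO_refl b atTop).sub
      (isLittleO_const_of_tendsto_atTop hb_top (b 0)).isBigO))

lemma tendsto_sum_Icc_div_of_isLittleO {x : ℕ → ℝ}
    (hx : (fun n => ∑ k ∈ range n, x k) =o[atTop] fun n => (n : ℝ)) :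
    Tendsto (fun n : ℕ => (∑ i ∈ Icc 1 n, x i) / (n : ℝ)) atTop (𝓝 0) := by
  have shifted : (fun n => ∑ k ∈ range (n + 1), x k) =o[atTop] fun n => (n : ℝ) :=
    (hx.comp_tendsto (tendsto_add_atTop_nat 1)).trans_isBigO
      (by simpa [Function.comp_def] using natCast_add_one_isBigO)
  have drop_zeroth := shifted.sub
    (isLittleO_const_of_tendsto_atTop tendsto_natCast_atTop_atTop (x 0))
  refine drop_zeroth.tendsto_div_nhds_zero.congr fun n => ?_
  rw [sum_range_eq_add_Ico x n.succ_pos, add_sub_cancel_left, Nat.succ_eq_add_one,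
    Ico_add_one_right_eq_Icc]

end Asymptotics

section Martingale

variable {Ω : Type*} {m m0 : MeasurableSpace Ω} {μ : Measure Ω} [IsFiniteMeasure μ]

lemma integral_sub_condExp_sq (hm : m ≤ m0) {X : Ω → ℝ} (hX : MemLp X 2 μ) :
    ∫ ω, (X ω - (μ[X | m]) ω) ^ 2 ∂μ = ∫ ω, X ω ^ 2 ∂μ - ∫ ω, (μ[X | m]) ω ^ 2 ∂μ := by
  have hE : MemLp (μ[X | m]) 2 μ := hX.condExp one_le_two
  calc ∫ ω, (X ω - (μ[X | m]) ω) ^ 2 ∂μ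
      = ∫ ω, (Var[X; μ | m]) ω ∂μ := (integral_condExp hm).symm
    _ = ∫ ω, ((μ[X ^ 2 | m]) ω - (μ[X | m]) ω ^ 2) ∂μ :=
        integral_congr_ae (condVar_ae_eq_condExp_sq_sub_sq_condExp hm hX)
    _ = ∫ ω, X ω ^ 2 ∂μ - ∫ ω, (μ[X | m]) ω ^ 2 ∂μ := by
        rw [integral_sub integrable_condExp hE.integrable_sq, integral_condExp hm]
        rfl

variable {ℱ : Filtration ℕ m0}

lemma martingale_sum_of_condExp_eq_zero {ξ : ℕ → Ω → ℝ}
    (hξm : ∀ k, StronglyMeasurable[ℱ (k + 1)] (ξ k)) (hξ : ∀ k, Integrable (ξ k) μ)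
    (hξ0 : ∀ k, μ[ξ k | ℱ k] =ᵐ[μ] 0) :
    Martingale (fun n => ∑ k ∈ Finset.range n, ξ k) ℱ μ := by
  refine martingale_of_condExp_sub_eq_zero_nat (fun n => ?_)
    (fun n => integrable_finsetSum' _ fun k _ => hξ k) fun n => ?_
  · exact Finset.stronglyMeasurable_sum _ fun k hk =>
      (hξm k).mono (ℱ.mono (Finset.mem_range.1 hk))
  · simpa only [Finset.sum_range_succ_sub_sum] using hξ0 n

lemma integral_martingale_sq {M : ℕ → Ω → ℝ} (hM : Martingale M ℱ μ)
    (hM2 : ∀ n, MemLp (M n) 2 μ) (n : ℕ) :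
    ∫ ω, M n ω ^ 2 ∂μ =
      ∫ ω, M 0 ω ^ 2 ∂μ + ∑ k ∈ Finset.range n, ∫ ω, (M (k + 1) ω - M k ω) ^ 2 ∂μ := by
  have increment (k : ℕ) : ∫ ω, (M (k + 1) ω - M k ω) ^ 2 ∂μ =
      ∫ ω, M (k + 1) ω ^ 2 ∂μ - ∫ ω, M k ω ^ 2 ∂μ := by
    have hk : μ[M (k + 1) | ℱ k] =ᵐ[μ] M k := hM.condExp_ae_eq k.le_succ
    have residual : ∫ ω, (M (k + 1) ω - (μ[M (k + 1) | ℱ k]) ω) ^ 2 ∂μ =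
        ∫ ω, (M (k + 1) ω - M k ω) ^ 2 ∂μ :=
      integral_congr_ae (hk.mono fun ω hω => by simp only [hω])
    have projection : ∫ ω, (μ[M (k + 1) | ℱ k]) ω ^ 2 ∂μ = ∫ ω, M k ω ^ 2 ∂μ :=
      integral_congr_ae (hk.mono fun ω hω => by simp only [hω])
    rw [← residual, ← projection]
    exact integral_sub_condExp_sq (ℱ.le k) (hM2 (k + 1))
  simp only [increment, Finset.sum_range_sub (fun k => ∫ ω, M k ω ^ 2 ∂μ), add_sub_cancel]

theorem exists_ae_tendsto_martingale_of_summable_sq {M : ℕ → Ω → ℝ} (hM : Martingale M ℱ μ)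
    (hM2 : ∀ n, MemLp (M n) 2 μ)
    (hsum : Summable fun k => ∫ ω, (M (k + 1) ω - M k ω) ^ 2 ∂μ) :
    ∀ᵐ ω ∂μ, ∃ l, Tendsto (fun n => M n ω) atTop (𝓝 l) := by
  set S := ∫ ω, M 0 ω ^ 2 ∂μ + ∑' k, ∫ ω, (M (k + 1) ω - M k ω) ^ 2 ∂μ
  have sq_le (n : ℕ) : ∫ ω, M n ω ^ 2 ∂μ ≤ S :=
    (integral_martingale_sq hM hM2 n).trans_le (add_le_add le_rfl
      (hsum.sum_le_tsum _ fun k _ => integral_nonneg fun ω => sq_nonneg _))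
  have abs_le (n : ℕ) : ∫ ω, ‖M n ω‖ ∂μ ≤ μ.real Set.univ + S := by
    calc ∫ ω, ‖M n ω‖ ∂μ ≤ ∫ ω, (1 + M n ω ^ 2) ∂μ := by
          refine integral_mono (hM.integrable n).norm
            ((integrable_const _).add (hM2 n).integrable_sq) fun ω => ?_
          change |M n ω| ≤ 1 + M n ω ^ 2
          nlinarith [sq_abs (M n ω), sq_nonneg (|M n ω| - 1)]
      _ = μ.real Set.univ + ∫ ω, M n ω ^ 2 ∂μ := by
          rw [integral_add (integrable_const _) (hM2 n).integrable_sq]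
          simp
      _ ≤ μ.real Set.univ + S := by gcongr; exact sq_le n
  refine hM.submartingale.exists_ae_tendsto_of_bdd (R := (μ.real Set.univ + S).toNNReal) fun n => ?_
  rw [eLpNorm_one_eq_lintegral_enorm, ← ofReal_integral_norm_eq_lintegral_enorm (hM.integrable n)]
  exact ENNReal.ofReal_le_ofReal (abs_le n)

theorem ae_sum_sub_condExp_isLittleO_of_summable {Y : ℕ → Ω → ℝ} {b : ℕ → ℝ}
    (hYm : ∀ k, StronglyMeasurable[ℱ (k + 1)] (Y k)) (hY2 : ∀ k, MemLp (Y k) 2 μ)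
    (hb_pos : ∀ k, 0 < b k) (hb : Monotone b) (hb_top : Tendsto b atTop atTop)
    (hsum : Summable fun k => (∫ ω, Y k ω ^ 2 ∂μ) / b k ^ 2) :
    ∀ᵐ ω ∂μ, (fun n => ∑ k ∈ Finset.range n, (Y k ω - (μ[Y k | ℱ k]) ω)) =o[atTop] b := by
  set ξ : ℕ → Ω → ℝ := fun k => (b k)⁻¹ • (Y k - μ[Y k | ℱ k])
  have ξ_memLp (k : ℕ) : MemLp (ξ k) 2 μ :=
    ((hY2 k).sub ((hY2 k).condExp one_le_two)).const_smul _
  have ξ_meas (k : ℕ) : StronglyMeasurable[ℱ (k + 1)] (ξ k) :=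
    ((hYm k).sub (stronglyMeasurable_condExp.mono (ℱ.mono k.le_succ))).const_smul _
  have ξ_condExp (k : ℕ) : μ[ξ k | ℱ k] =ᵐ[μ] 0 := by
    have hYk := (hY2 k).integrable one_le_two
    filter_upwards [condExp_smul (μ := μ) (b k)⁻¹ (Y k - μ[Y k | ℱ k]) (ℱ k),
      condExp_sub hYk integrable_condExp (ℱ k)] with ω hsmul hsub
    rw [hsmul, Pi.smul_apply, hsub, condExp_of_stronglyMeasurable (ℱ.le k)
      stronglyMeasurable_condExp integrable_condExp]
    simp
  have ξ_sq_le (k : ℕ) : ∫ ω, ξ k ω ^ 2 ∂μ ≤ (∫ ω, Y k ω ^ 2 ∂μ) / b k ^ 2 := by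
    have hE : 0 ≤ ∫ ω, (μ[Y k | ℱ k]) ω ^ 2 ∂μ := integral_nonneg fun ω => sq_nonneg _
    simp only [ξ, Pi.smul_apply, Pi.sub_apply, smul_eq_mul, mul_pow, integral_const_mul,
      integral_sub_condExp_sq (ℱ.le k) (hY2 k), inv_pow, div_eq_inv_mul]
    gcongr
    linarith
  have ξ_summable : Summable fun k => ∫ ω, ξ k ω ^ 2 ∂μ :=
    hsum.of_nonneg_of_le (fun k => integral_nonneg fun ω => sq_nonneg _) ξ_sq_le
  have martingale := martingale_sum_of_condExp_eq_zero ξ_meas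
    (fun k => (ξ_memLp k).integrable one_le_two) ξ_condExp
  have converges := exists_ae_tendsto_martingale_of_summable_sq martingale
    (fun n => memLp_finsetSum' _ fun k _ => ξ_memLp k)
    (by simpa [Finset.sum_range_succ] using ξ_summable)
  filter_upwards [converges] with ω ⟨l, hl⟩
  simp only [Finset.sum_apply] at hl
  refine (kronecker_isLittleO hb hb_top hl).congr_left fun n => Finset.sum_congr rfl fun k _ => ?_
  simp [ξ, (hb_pos k).ne']

end Martingale

section Lipschitz

variable {α F : Type*} [PseudoMetricSpace α] [NormedAddCommGroup F]

lemma norm_le_norm_add_mul_dist_of_lipschitzWith {K : ℝ≥0} {f : α → F} (hf : LipschitzWith K f)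
    (x y : α) : ‖f y‖ ≤ ‖f x‖ + K * dist x y := by
  have := hf.dist_le_mul x y
  rw [dist_eq_norm] at this
  exact (norm_le_norm_add_norm_sub _ _).trans (by gcongr)

lemma lipschitzWith_tsum {u : ℕ → α → F} {b : ℕ → ℝ≥0} (hb : Summable b)
    (hu : ∀ n, LipschitzWith (b n) (u n)) (hux : ∀ x, Summable fun n => u n x) :
    LipschitzWith (∑' n, b n) fun x => ∑' n, u n x := by
  refine LipschitzWith.of_dist_le_mul fun x y => ?_
  rw [dist_eq_norm, ← (hux x).tsum_sub (hux y), NNReal.coe_tsum, ← tsum_mul_right]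
  exact tsum_of_norm_bounded ((NNReal.summable_coe.2 hb).mul_right (dist x y)).hasSum
    fun n => by simpa only [dist_eq_norm] using (hu n).dist_le_mul x y

end Lipschitz

section L2Bounded

open Asymptotics

variable {Ω : Type*} {m0 : MeasurableSpace Ω} {μ : Measure Ω}

lemma ae_tendsto_zero_of_summable_integral_sq {Y : ℕ → Ω → ℝ} (hY : ∀ n, MemLp (Y n) 2 μ)
    (hsum : Summable fun n => ∫ ω, Y n ω ^ 2 ∂μ) :
    ∀ᵐ ω ∂μ, Tendsto (fun n => Y n ω) atTop (𝓝 0) := by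
  have hint (n : ℕ) := (hY n).integrable_sq
  have eLpNorm_sq (n : ℕ) :
      eLpNorm (fun ω => Y n ω ^ 2) 1 μ = ENNReal.ofReal (∫ ω, Y n ω ^ 2 ∂μ) := by
    rw [eLpNorm_one_eq_lintegral_enorm, ← ofReal_integral_norm_eq_lintegral_enorm (hint n)]
    simp
  have ae_summable := summable_norm_of_tsum_eLpNorm_ne_top le_rfl
    (fun n => (hint n).aestronglyMeasurable)
    (by simpa only [eLpNorm_sq] using hsum.tsum_ofReal_ne_top)
  filter_upwards [ae_summable] with ω hω
  have hsq : Tendsto (fun n => Y n ω ^ 2) atTop (𝓝 0) :=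
    tendsto_zero_iff_norm_tendsto_zero.2 hω.tendsto_atTop_zero
  rw [tendsto_zero_iff_abs_tendsto_zero]
  simpa [Function.comp_def, Real.sqrt_sq_eq_abs] using hsq.sqrt

/-- The sequence `Y` is bounded in `L²(μ)`. Membership in `L²` is required separately because the
integral of a non-integrable function is `0`. -/
def IsL2Bounded (Y : ℕ → Ω → ℝ) (μ : Measure Ω) : Prop :=
  ∃ B : ℝ, ∀ n, MemLp (Y n) 2 μ ∧ ∫ ω, Y n ω ^ 2 ∂μ ≤ B

variable {Y : ℕ → Ω → ℝ}

lemma IsL2Bounded.memLp (hY : IsL2Bounded Y μ) (n : ℕ) : MemLp (Y n) 2 μ :=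
  let ⟨_, hB⟩ := hY; (hB n).1

lemma IsL2Bounded.comp (hY : IsL2Bounded Y μ) (φ : ℕ → ℕ) : IsL2Bounded (fun n => Y (φ n)) μ :=
  let ⟨B, hB⟩ := hY; ⟨B, fun n => hB (φ n)⟩

lemma IsL2Bounded.of_sq_le [IsFiniteMeasure μ] {V : ℕ → Ω → ℝ} {a b : ℝ}
    (hY : ∀ n, AEStronglyMeasurable (Y n) μ) (hV : ∀ n, Integrable (V n) μ)
    (hV_bdd : ∃ M : ℝ, ∀ n, ∫ ω, V n ω ∂μ ≤ M) (hb : 0 ≤ b)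
    (hle : ∀ n ω, Y n ω ^ 2 ≤ a + b * V n ω) : IsL2Bounded Y μ := by
  obtain ⟨M, hM⟩ := hV_bdd
  have dominant (n : ℕ) : Integrable (fun ω => a + b * V n ω) μ :=
    (integrable_const a).add ((hV n).const_mul b)
  have sq_integrable (n : ℕ) : Integrable (fun ω => Y n ω ^ 2) μ :=
    (dominant n).mono' ((hY n).pow 2) (ae_of_all _ fun ω => by simpa using hle n ω)
  refine ⟨μ.real Set.univ * a + b * M, fun n =>
    ⟨(memLp_two_iff_integrable_sq (hY n)).2 (sq_integrable n), ?_⟩⟩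
  calc ∫ ω, Y n ω ^ 2 ∂μ ≤ ∫ ω, (a + b * V n ω) ∂μ :=
        integral_mono (sq_integrable n) (dominant n) (hle n)
    _ = μ.real Set.univ * a + b * ∫ ω, V n ω ∂μ := by
        rw [integral_add (integrable_const a) ((hV n).const_mul b), integral_const,
          integral_const_mul, smul_eq_mul]
    _ ≤ μ.real Set.univ * a + b * M := by gcongr; exact hM n

lemma isL2Bounded_of_integral_rpow_le [IsFiniteMeasure μ] {p : ℝ} (hp : 2 ≤ p)
    (hY_nonneg : ∀ n ω, 0 ≤ Y n ω) (hYp : ∀ n, Integrable (fun ω => Y n ω ^ p) μ)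
    (hYp_bdd : ∃ M : ℝ, ∀ n, ∫ ω, Y n ω ^ p ∂μ ≤ M) : IsL2Bounded Y μ := by
  have hY (n : ℕ) : AEMeasurable (Y n) μ := by
    simpa only [Real.rpow_rpow_inv (hY_nonneg n _) (by linarith)]
      using (hYp n).aemeasurable.pow_const p⁻¹
  refine .of_sq_le (a := 1) (b := 1) (fun n => (hY n).aestronglyMeasurable) hYp hYp_bdd
    zero_le_one fun n ω => ?_
  have rpow_nonneg := Real.rpow_nonneg (hY_nonneg n ω) p
  rcases le_total (Y n ω) 1 with h | h
  · nlinarith [hY_nonneg n ω]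
  · have := Real.rpow_le_rpow_of_exponent_le h hp
    rw [Real.rpow_two] at this
    linarith

lemma IsL2Bounded.comp_lipschitzWith {α : Type*} [PseudoMetricSpace α] [MeasurableSpace α]
    [OpensMeasurableSpace α] [IsFiniteMeasure μ] {X : ℕ → Ω → α} {x : α} {K : ℝ≥0} {f : α → ℝ}
    (hx : IsL2Bounded (fun n ω => dist x (X n ω)) μ) (hf : LipschitzWith K f)
    (hX : ∀ n, AEMeasurable (X n) μ) : IsL2Bounded (fun n ω => f (X n ω)) μ := by
  refine .of_sq_le (V := fun n ω => dist x (X n ω) ^ 2) (a := 2 * f x ^ 2) (b := 2 * K ^ 2)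
    (fun n => (hf.continuous.measurable.comp_aemeasurable (hX n)).aestronglyMeasurable)
    (fun n => (hx.memLp n).integrable_sq) (hx.imp fun B hB n => (hB n).2) (by positivity)
    fun n ω => ?_
  calc f (X n ω) ^ 2 ≤ (|f x| + K * dist x (X n ω)) ^ 2 := by
        rw [← sq_abs (f (X n ω))]
        gcongr
        exact norm_le_norm_add_mul_dist_of_lipschitzWith hf x (X n ω)
    _ ≤ 2 * (|f x| ^ 2 + (K * dist x (X n ω)) ^ 2) := add_sq_le
    _ = 2 * f x ^ 2 + 2 * K ^ 2 * dist x (X n ω) ^ 2 := by rw [sq_abs]; ring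

lemma IsL2Bounded.summable_integral_sq_div (hY : IsL2Bounded Y μ) :
    Summable fun n : ℕ => (∫ ω, Y n ω ^ 2 ∂μ) / ((n : ℝ) + 1) ^ 2 := by
  obtain ⟨B, hB⟩ := hY
  have inv_sq : Summable fun n : ℕ => (((n : ℝ) + 1) ^ 2)⁻¹ := by
    exact_mod_cast (summable_nat_add_iff 1).2 (Real.summable_nat_pow_inv.2 one_lt_two)
  refine (inv_sq.mul_left B).of_nonneg_of_le
    (fun n => div_nonneg (integral_nonneg fun ω => sq_nonneg _) (by positivity)) fun n => ?_
  rw [← div_eq_mul_inv]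
  gcongr
  exact (hB n).2

theorem IsL2Bounded.ae_isLittleO (hY : IsL2Bounded Y μ) :
    ∀ᵐ ω ∂μ, (fun n => Y n ω) =o[atTop] fun n => (n : ℝ) := by
  have scaled := ae_tendsto_zero_of_summable_integral_sq (Y := fun n ω => ((n : ℝ) + 1)⁻¹ * Y n ω)
    (fun n => (hY.memLp n).const_mul _)
    (by simpa only [mul_pow, integral_const_mul, inv_pow, div_eq_inv_mul]
      using hY.summable_integral_sq_div)
  filter_upwards [scaled] with ω hω
  refine IsLittleO.trans_isBigO ?_ natCast_add_one_isBigO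
  refine (isLittleO_iff_tendsto' (.of_forall fun n hn => absurd hn (by positivity))).2 ?_
  simpa only [div_eq_inv_mul] using hω

theorem IsL2Bounded.ae_sum_sub_condExp_isLittleO [IsFiniteMeasure μ] {ℱ : Filtration ℕ m0}
    (hY : IsL2Bounded Y μ) (hYm : ∀ k, StronglyMeasurable[ℱ (k + 1)] (Y k)) :
    ∀ᵐ ω ∂μ, (fun n => ∑ k ∈ Finset.range n, (Y k ω - (μ[Y k | ℱ k]) ω)) =o[atTop]
      fun n => (n : ℝ) := by
  have weights_mono : Monotone fun n : ℕ => (n : ℝ) + 1 := Nat.mono_cast.add_const 1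
  have weights_top : Tendsto (fun n : ℕ => (n : ℝ) + 1) atTop atTop :=
    tendsto_atTop_add_const_right _ 1 tendsto_natCast_atTop_atTop
  filter_upwards [ae_sum_sub_condExp_isLittleO_of_summable hYm hY.memLp
    (fun n => by positivity) weights_mono weights_top hY.summable_integral_sq_div] with ω hω
  exact hω.trans_isBigO natCast_add_one_isBigO

end L2Bounded

section MarkovOperator

variable {S : Type*} [MeasurableSpace S] {π : Kernel S S} {ν : Measure S} {f : S → ℝ}

lemma integrable_Pfun (hf : Integrable f (Pmeas π ν)) : Integrable (Pfun π f) ν := by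
  change Integrable f (π ∘ₘ ν) at hf
  rw [Measure.comp_eq_comp_const_apply] at hf
  have h := hf.integral_comp
  rwa [Kernel.const_apply] at h

lemma integral_Pmeas (hf : Integrable f (Pmeas π ν)) :
    ∫ x, f x ∂(Pmeas π ν) = ∫ x, Pfun π f x ∂ν := by
  change Integrable f (π ∘ₘ ν) at hf
  change ∫ x, f x ∂(π ∘ₘ ν) = _
  rw [Measure.comp_eq_comp_const_apply] at hf ⊢
  rw [Kernel.integral_comp hf, Kernel.const_apply]
  rfl

lemma integral_iterate_Pmeas (n : ℕ) (hf : Integrable f ((Pmeas π)^[n] ν)) :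
    ∫ x, f x ∂((Pmeas π)^[n] ν) = ∫ x, (Pfun π)^[n] f x ∂ν := by
  induction n generalizing f with
  | zero => rfl
  | succ n ih =>
    rw [Function.iterate_succ_apply'] at hf ⊢
    rw [integral_Pmeas hf, ih (integrable_Pfun hf), Function.iterate_succ_apply]

lemma measurable_Pfun [IsSFiniteKernel π] (hf : Measurable f) : Measurable (Pfun π f) :=
  hf.stronglyMeasurable.integral_kernel.measurable

lemma Pmeas_dirac (x : S) : Pmeas π (Measure.dirac x) = π x :=
  Measure.dirac_bind π.measurable x

end MarkovOperator

section FirstMoment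

variable {S : Type*} [MeasurableSpace S] [MetricSpace S] {ν : Measure S}

lemma finiteFirstMoment_dirac [BorelSpace S] (x : S) : FiniteFirstMoment (Measure.dirac x) :=
  ⟨inferInstance, x, integrable_dirac (by simp)⟩

lemma FiniteFirstMoment.iterate_Pmeas {π : Kernel S S}
    (hπ : ∀ ν, FiniteFirstMoment ν → FiniteFirstMoment (Pmeas π ν))
    (hν : FiniteFirstMoment ν) (n : ℕ) : FiniteFirstMoment ((Pmeas π)^[n] ν) :=
  Function.Iterate.rec FiniteFirstMoment hν hπ n

lemma FiniteFirstMoment.kernel_apply [BorelSpace S] {π : Kernel S S}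
    (hπ : ∀ ν, FiniteFirstMoment ν → FiniteFirstMoment (Pmeas π ν)) (x : S) :
    FiniteFirstMoment (π x) :=
  Pmeas_dirac (π := π) x ▸ hπ _ (finiteFirstMoment_dirac x)

variable {K : ℝ≥0} {f : S → ℝ}

lemma FiniteFirstMoment.integrable_of_lipschitzWith [OpensMeasurableSpace S]
    (hν : FiniteFirstMoment ν) (hf : LipschitzWith K f) : Integrable f ν := by
  obtain ⟨_, x, hx⟩ := hν
  refine ((integrable_const |f x|).add (hx.const_mul K)).mono'
    hf.continuous.measurable.aestronglyMeasurable (ae_of_all _ fun y => ?_)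
  exact norm_le_norm_add_mul_dist_of_lipschitzWith hf x y

lemma FiniteFirstMoment.integrable_dist [OpensMeasurableSpace S] (hν : FiniteFirstMoment ν)
    (x : S) : Integrable (fun y => dist x y) ν :=
  hν.integrable_of_lipschitzWith (LipschitzWith.dist_right x)

lemma FiniteFirstMoment.norm_sub_integral_le [OpensMeasurableSpace S] (hν : FiniteFirstMoment ν)
    (hf : LipschitzWith K f) (x : S) : ‖f x - ∫ y, f y ∂ν‖ ≤ K * ∫ y, dist x y ∂ν := by
  have := hν.1
  have hint := hν.integrable_of_lipschitzWith hf
  calc ‖f x - ∫ y, f y ∂ν‖ = ‖∫ y, (f x - f y) ∂ν‖ := by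
        rw [integral_sub (integrable_const _) hint, integral_const, probReal_univ, one_smul]
    _ ≤ ∫ y, K * dist x y ∂ν := norm_integral_le_of_norm_le ((hν.integrable_dist x).const_mul _)
        (ae_of_all _ fun y => hf.dist_le_mul x y)
    _ = K * ∫ y, dist x y ∂ν := integral_const_mul _ _

lemma FiniteFirstMoment.integral_tsum_of_lipschitzWith [OpensMeasurableSpace S]
    (hν : FiniteFirstMoment ν) {u : ℕ → S → ℝ} {b : ℕ → ℝ≥0} (hb : Summable b)
    (hu : ∀ n, LipschitzWith (b n) (u n)) {x : S} (hx : Summable fun n => u n x) :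
    ∫ y, ∑' n, u n y ∂ν = ∑' n, ∫ y, u n y ∂ν := by
  have := hν.1
  have hint (n : ℕ) := hν.integrable_of_lipschitzWith (hu n)
  refine (integral_tsum_of_summable_integral_norm hint ?_).symm
  refine (hx.norm.add ((NNReal.summable_coe.2 hb).mul_right (∫ y, dist x y ∂ν))).of_nonneg_of_le
    (fun n => integral_nonneg fun y => norm_nonneg _) fun n => ?_
  have bound_integrable : Integrable (fun y => b n * dist x y) ν :=
    (hν.integrable_dist x).const_mul _
  calc ∫ y, ‖u n y‖ ∂ν ≤ ∫ y, (‖u n x‖ + b n * dist x y) ∂ν :=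
        integral_mono (hint n).norm ((integrable_const _).add bound_integrable)
          fun y => norm_le_norm_add_mul_dist_of_lipschitzWith (hu n) x y
    _ = ‖u n x‖ + b n * ∫ y, dist x y ∂ν := by
        rw [integral_add (integrable_const _) bound_integrable, integral_const, integral_const_mul,
          probReal_univ, one_smul]

end FirstMoment

section Wasserstein

variable {S : Type*} [MeasurableSpace S] [MetricSpace S] {ν₁ ν₂ : Measure S}

lemma wassDist_dirac_le [BorelSpace S] (x y : S) :
    wassDist (Measure.dirac x) (Measure.dirac y) ≤ dist x y := by
  refine Real.sSup_le ?_ dist_nonneg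
  rintro r ⟨f, hf, rfl⟩
  rw [integral_dirac, integral_dirac]
  simpa [Real.dist_eq] using hf.dist_le_mul x y

lemma abs_integral_sub_le_wassDist_of_lipschitzWith_one [OpensMeasurableSpace S]
    (h₁ : FiniteFirstMoment ν₁) (h₂ : FiniteFirstMoment ν₂) {f : S → ℝ} (hf : LipschitzWith 1 f) :
    |∫ x, f x ∂ν₁ - ∫ x, f x ∂ν₂| ≤ wassDist ν₁ ν₂ := by
  obtain ⟨x, -⟩ := h₁.2
  refine le_csSup ⟨∫ y, dist x y ∂ν₁ + ∫ y, dist x y ∂ν₂, ?_⟩ ⟨f, hf, rfl⟩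
  rintro r ⟨g, hg, rfl⟩
  have through_point := abs_sub_le (∫ y, g y ∂ν₁) (g x) (∫ y, g y ∂ν₂)
  have dist₁ := h₁.norm_sub_integral_le hg x
  have dist₂ := h₂.norm_sub_integral_le hg x
  rw [Real.norm_eq_abs, NNReal.coe_one, one_mul] at dist₁ dist₂
  rw [abs_sub_comm] at dist₁
  linarith

lemma abs_integral_sub_le_wassDist [OpensMeasurableSpace S] (h₁ : FiniteFirstMoment ν₁)
    (h₂ : FiniteFirstMoment ν₂) {K : ℝ≥0} {f : S → ℝ} (hf : LipschitzWith K f) :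
    |∫ x, f x ∂ν₁ - ∫ x, f x ∂ν₂| ≤ K * wassDist ν₁ ν₂ := by
  have := h₁.1
  have := h₂.1
  rcases eq_or_ne K 0 with rfl | hK
  · obtain ⟨x, -⟩ := h₁.2
    have constant (y : S) : f y = f x := by simpa using hf.dist_le_mul y x
    simp [constant]
  · have normalized : LipschitzWith 1 fun x => (K⁻¹ : ℝ) * f x :=
      ((lipschitzWith_smul (K⁻¹ : ℝ)).comp hf).weaken (by simp [hK])
    have h := abs_integral_sub_le_wassDist_of_lipschitzWith_one h₁ h₂ normalized
    rw [integral_const_mul, integral_const_mul, ← mul_sub, abs_mul, abs_of_nonneg (by positivity),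
      inv_mul_le_iff₀ (by positivity)] at h
    exact h

end Wasserstein

section Corrector

variable {S : Type*} [MeasurableSpace S] [MetricSpace S] [BorelSpace S] {π : Kernel S S}

lemma iterate_Pfun_apply {n : ℕ} {f : S → ℝ} {x : S}
    (hf : Integrable f ((Pmeas π)^[n] (Measure.dirac x))) :
    (Pfun π)^[n] f x = ∫ y, f y ∂((Pmeas π)^[n] (Measure.dirac x)) := by
  rw [integral_iterate_Pmeas n hf, integral_dirac]

lemma lipschitzWith_iterate_Pfun
    (hπ : ∀ ν, FiniteFirstMoment ν → FiniteFirstMoment (Pmeas π ν)) {n : ℕ} {a K : ℝ≥0}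
    (hW : ∀ ν₁ ν₂, FiniteFirstMoment ν₁ → FiniteFirstMoment ν₂ →
      wassDist ((Pmeas π)^[n] ν₁) ((Pmeas π)^[n] ν₂) ≤ a * wassDist ν₁ ν₂)
    {f : S → ℝ} (hf : LipschitzWith K f) : LipschitzWith (K * a) ((Pfun π)^[n] f) := by
  refine LipschitzWith.of_dist_le_mul fun x y => ?_
  have dirac_moment (z : S) := finiteFirstMoment_dirac z
  have iterate_moment (z : S) := (dirac_moment z).iterate_Pmeas hπ n
  rw [Real.dist_eq, iterate_Pfun_apply ((iterate_moment x).integrable_of_lipschitzWith hf),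
    iterate_Pfun_apply ((iterate_moment y).integrable_of_lipschitzWith hf), NNReal.coe_mul,
    mul_assoc]
  calc _ ≤ K * wassDist ((Pmeas π)^[n] (Measure.dirac x)) ((Pmeas π)^[n] (Measure.dirac y)) :=
        abs_integral_sub_le_wassDist (iterate_moment x) (iterate_moment y) hf
    _ ≤ K * (a * dist x y) := by
        gcongr
        exact (hW _ _ (dirac_moment x) (dirac_moment y)).trans
          (by gcongr; exact wassDist_dirac_le x y)

lemma exists_summable_lipschitzWith_iterate_Pfun
    (hπ : ∀ ν, FiniteFirstMoment ν → FiniteFirstMoment (Pmeas π ν)) {a : ℕ → ℝ≥0}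
    (ha : Summable a)
    (hW : ∀ n, 1 ≤ n → ∀ ν₁ ν₂, FiniteFirstMoment ν₁ → FiniteFirstMoment ν₂ →
      wassDist ((Pmeas π)^[n] ν₁) ((Pmeas π)^[n] ν₂) ≤ a n * wassDist ν₁ ν₂)
    {K : ℝ≥0} {f : S → ℝ} (hf : LipschitzWith K f) :
    ∃ b : ℕ → ℝ≥0, Summable b ∧ ∀ n, LipschitzWith (b n) ((Pfun π)^[n] f) := by
  refine ⟨fun n => n.casesOn K fun n => K * a (n + 1), ?_, fun n => ?_⟩
  · exact (NNReal.summable_nat_add_iff 1).1 (((NNReal.summable_nat_add_iff 1).2 ha).mul_left K)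
  · cases n with
    | zero => exact hf
    | succ n => exact lipschitzWith_iterate_Pfun hπ (hW (n + 1) n.succ_pos) hf

variable {ψ : S → ℝ} {b : ℕ → ℝ≥0}

lemma summable_iterate_Pfun {ν : Measure S} (hν : FiniteFirstMoment ν) (hinv : Pmeas π ν = ν)
    (hψ0 : ∫ y, ψ y ∂ν = 0) (hb : Summable b) (hψ : ∀ n, LipschitzWith (b n) ((Pfun π)^[n] ψ))
    (x : S) : Summable fun n => (Pfun π)^[n] ψ x := by
  have hinv_n (n : ℕ) : (Pmeas π)^[n] ν = ν := Function.iterate_fixed hinv n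
  have centered (n : ℕ) : ∫ y, (Pfun π)^[n] ψ y ∂ν = 0 := by
    rw [← integral_iterate_Pmeas n, hinv_n, hψ0]
    exact (hinv_n n).symm ▸ hν.integrable_of_lipschitzWith (hψ 0)
  refine .of_norm_bounded ((NNReal.summable_coe.2 hb).mul_right (∫ y, dist x y ∂ν)) fun n => ?_
  simpa only [centered, sub_zero] using hν.norm_sub_integral_le (hψ n) x

theorem chiFun_sub_Pfun_chiFun {x : S} (hx : FiniteFirstMoment (π x)) (hb : Summable b)
    (hψ : ∀ n, LipschitzWith (b n) ((Pfun π)^[n] ψ))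
    (hsum : Summable fun n => (Pfun π)^[n] ψ x) :
    chiFun π ψ x - Pfun π (chiFun π ψ) x = ψ x := by
  have shift : Pfun π (chiFun π ψ) x = ∑' n, (Pfun π)^[n + 1] ψ x := by
    simp only [Function.iterate_succ_apply']
    exact hx.integral_tsum_of_lipschitzWith hb hψ hsum
  rw [shift, chiFun, hsum.tsum_eq_zero_add, Function.iterate_zero_apply, add_sub_cancel_right]

theorem exists_lipschitzWith_poisson_solution
    (hπ : ∀ ν, FiniteFirstMoment ν → FiniteFirstMoment (Pmeas π ν)) {a : ℕ → ℝ≥0}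
    (ha : Summable a)
    (hW : ∀ n, 1 ≤ n → ∀ ν₁ ν₂, FiniteFirstMoment ν₁ → FiniteFirstMoment ν₂ →
      wassDist ((Pmeas π)^[n] ν₁) ((Pmeas π)^[n] ν₂) ≤ a n * wassDist ν₁ ν₂)
    {ν : Measure S} (hν : FiniteFirstMoment ν) (hinv : Pmeas π ν = ν) {L : ℝ≥0}
    (hψ : LipschitzWith L ψ) (hψ0 : ∫ y, ψ y ∂ν = 0) :
    ∃ (χ : S → ℝ) (K : ℝ≥0), LipschitzWith K χ ∧ ∀ x, χ x - Pfun π χ x = ψ x := by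
  obtain ⟨b, hb, hψb⟩ := exists_summable_lipschitzWith_iterate_Pfun hπ ha hW hψ
  have hsum := summable_iterate_Pfun hν hinv hψ0 hb hψb
  exact ⟨chiFun π ψ, ∑' n, b n, lipschitzWith_tsum hb hψb hsum, fun x =>
    chiFun_sub_Pfun_chiFun (.kernel_apply hπ x) hb hψb (hsum x)⟩

end Corrector

section MarkovChain

open Asymptotics

variable {S : Type*} [MeasurableSpace S] [MetricSpace S] [SecondCountableTopology S] [BorelSpace S]
  {π : Kernel S S} {ν : Measure S} {P : Measure (ℕ → S)} {f : S → ℝ}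

lemma stronglyMeasurable_natFilt_comp_eval (hf : Measurable f) (n : ℕ) :
    StronglyMeasurable[natFilt n] fun ω : ℕ → S => f (ω n) :=
  (hf.comp (Filtration.stronglyAdapted_natural (u := fun k (ω : ℕ → S) => ω k)
    (fun k => (measurable_pi_apply k).stronglyMeasurable) n).measurable).stronglyMeasurable

lemma IsMarkovChainLaw.measureReal_restrict_preimage_succ (hP : IsMarkovChainLaw π ν P) {n : ℕ}
    {A : Set (ℕ → S)} (hA : MeasurableSet[natFilt n] A) {B : Set S} (hB : MeasurableSet B) :
    (P.restrict A).real ((fun ω => ω (n + 1)) ⁻¹' B) = ∫ ω in A, (π (ω n)).real B ∂P := by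
  have := hP.prob
  have next_measurable : MeasurableSet ((fun ω : ℕ → S => ω (n + 1)) ⁻¹' B) :=
    measurable_pi_apply (n + 1) hB
  have indicator_bounded : IsBounded (Set.range (B.indicator (1 : S → ℝ))) :=
    (Set.toFinite {0, 1}).isBounded.subset (Set.range_subset_iff.2 fun x => by
      by_cases hx : x ∈ B <;> simp [hx])
  have markov_indicator := hP.markov n _ (measurable_one.indicator hB) indicator_bounded
  simp only [integral_indicator_one hB] at markov_indicator
  calc (P.restrict A).real ((fun ω => ω (n + 1)) ⁻¹' B)
      = ∫ ω in A, B.indicator (1 : S → ℝ) (ω (n + 1)) ∂P :=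
        (integral_indicator_one next_measurable).symm
    _ = ∫ ω in A, (P[fun ω => B.indicator (1 : S → ℝ) (ω (n + 1)) | natFilt n]) ω ∂P :=
        (setIntegral_condExp (natFilt.le n)
          ((integrable_const (1 : ℝ)).indicator next_measurable) hA).symm
    _ = ∫ ω in A, (π (ω n)).real B ∂P :=
        integral_congr_ae (ae_restrict_of_ae markov_indicator)

lemma IsMarkovChainLaw.map_succ_restrict [IsFiniteKernel π] (hP : IsMarkovChainLaw π ν P) {n : ℕ}
    {A : Set (ℕ → S)} (hA : MeasurableSet[natFilt n] A) :
    (P.restrict A).map (fun ω => ω (n + 1)) = Pmeas π ((P.restrict A).map fun ω => ω n) := by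
  have := hP.prob
  ext B hB
  have kernel_measurable : Measurable fun ω : ℕ → S => π (ω n) B :=
    (π.measurable_coe hB).comp (measurable_pi_apply n)
  calc (P.restrict A).map (fun ω => ω (n + 1)) B
      = ENNReal.ofReal ((P.restrict A).real ((fun ω => ω (n + 1)) ⁻¹' B)) := by
        rw [Measure.map_apply (measurable_pi_apply _) hB, ofReal_measureReal]
    _ = ENNReal.ofReal (∫ ω in A, (π (ω n)).real B ∂P) := by
        rw [hP.measureReal_restrict_preimage_succ hA hB]
    _ = ∫⁻ ω in A, π (ω n) B ∂P := by
        have kernel_finite : ∫⁻ ω in A, π (ω n) B ∂P ≠ ∞ :=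
          (setLIntegral_lt_top_of_le_nnreal (measure_ne_top P A)
            ⟨π.bound.toNNReal, fun ω _ =>
              (π.measure_le_bound (ω n) B).trans_eq (ENNReal.coe_toNNReal π.bound_ne_top).symm⟩).ne
        simp only [Measure.real]
        rw [integral_toReal kernel_measurable.aemeasurable (.of_forall fun ω => measure_lt_top _ _),
          ENNReal.ofReal_toReal kernel_finite]
    _ = Pmeas π ((P.restrict A).map fun ω => ω n) B := by
        rw [Pmeas, Measure.bind_apply hB π.aemeasurable,
          lintegral_map (π.measurable_coe hB) (measurable_pi_apply n)]

theorem IsMarkovChainLaw.condExp_comp_succ [IsFiniteKernel π] (hP : IsMarkovChainLaw π ν P)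
    (hf : Measurable f) {n : ℕ} (hint : Integrable (fun ω => f (ω (n + 1))) P) :
    P[fun ω => f (ω (n + 1)) | natFilt n] =ᵐ[P] fun ω => Pfun π f (ω n) := by
  have := hP.prob
  have hPf := measurable_Pfun (π := π) hf
  have integrable_Pmeas {A : Set (ℕ → S)} (hA : MeasurableSet[natFilt n] A) :
      Integrable f (Pmeas π ((P.restrict A).map fun ω => ω n)) := by
    rw [← hP.map_succ_restrict hA]
    exact (integrable_map_measure hf.aestronglyMeasurable
      (measurable_pi_apply _).aemeasurable).2 hint.restrict
  refine (ae_eq_condExp_of_forall_setIntegral_eq (natFilt.le n) hint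
    (fun A hA _ => ?_) (fun A hA _ => ?_)
    (stronglyMeasurable_natFilt_comp_eval hPf n).aestronglyMeasurable).symm
  · exact (integrable_map_measure hPf.aestronglyMeasurable
      (measurable_pi_apply n).aemeasurable).1 (integrable_Pfun (integrable_Pmeas hA))
  · calc ∫ ω in A, Pfun π f (ω n) ∂P
        = ∫ x, Pfun π f x ∂((P.restrict A).map fun ω => ω n) :=
          (integral_map (measurable_pi_apply n).aemeasurable hPf.aestronglyMeasurable).symm
      _ = ∫ x, f x ∂((P.restrict A).map fun ω => ω (n + 1)) := by
          rw [hP.map_succ_restrict hA, integral_Pmeas (integrable_Pmeas hA)]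
      _ = ∫ ω in A, f (ω (n + 1)) ∂P :=
          integral_map (measurable_pi_apply _).aemeasurable hf.aestronglyMeasurable

theorem IsMarkovChainLaw.ae_sum_sub_Pfun_isLittleO [IsFiniteKernel π]
    (hP : IsMarkovChainLaw π ν P) (hf : Measurable f) (hf2 : IsL2Bounded (fun n ω => f (ω n)) P) :
    ∀ᵐ ω ∂P, (fun n => ∑ k ∈ Finset.range n, (f (ω k) - Pfun π f (ω k))) =o[atTop]
      fun n => (n : ℝ) := by
  have := hP.prob
  have next_L2 := hf2.comp (· + 1)
  have condExp_next : ∀ᵐ ω ∂P, ∀ k,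
      (P[fun ω => f (ω (k + 1)) | natFilt k]) ω = Pfun π f (ω k) :=
    ae_all_iff.2 fun k => hP.condExp_comp_succ hf ((next_L2.memLp k).integrable one_le_two)
  filter_upwards [condExp_next, hf2.ae_isLittleO,
    next_L2.ae_sum_sub_condExp_isLittleO fun k => stronglyMeasurable_natFilt_comp_eval hf (k + 1)]
    with ω hcond hlast hmart
  have hfirst : (fun _ => f (ω 0)) =o[atTop] fun n : ℕ => (n : ℝ) :=
    isLittleO_const_of_tendsto_atTop tendsto_natCast_atTop_atTop _
  refine ((hmart.add hfirst).sub hlast).congr_left fun n => ?_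
  have telescope := Finset.sum_range_sub (fun k => f (ω k)) n
  simp only [hcond, Finset.sum_sub_distrib] at telescope ⊢
  linarith

end MarkovChain

theorem slln_for_markov_chain_general {S : Type*} [MeasurableSpace S] [MetricSpace S]
    [SecondCountableTopology S] [BorelSpace S] (π : Kernel S S) [IsMarkovKernel π]
    (hπ : ∀ ν : Measure S, FiniteFirstMoment ν → FiniteFirstMoment (Pmeas π ν))
    {a : ℕ → ℝ≥0} (ha : Summable a)
    (hW : ∀ n, 1 ≤ n → ∀ ν₁ ν₂, FiniteFirstMoment ν₁ → FiniteFirstMoment ν₂ →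
      wassDist ((Pmeas π)^[n] ν₁) ((Pmeas π)^[n] ν₂) ≤ a n * wassDist ν₁ ν₂)
    {μ : Measure S} {P : Measure (ℕ → S)} (hP : IsMarkovChainLaw π μ P)
    {x₀ : S} (hx₀ : IsL2Bounded (fun n ω => dist x₀ (ω n)) P)
    {μstar : Measure S} (hμstar : FiniteFirstMoment μstar) (hinv : Pmeas π μstar = μstar)
    {ψ : S → ℝ} {L : ℝ≥0} (hψ : LipschitzWith L ψ) (hψ0 : ∫ x, ψ x ∂μstar = 0) :
    ∀ᵐ ω ∂P, Tendsto (fun n : ℕ => (∑ i ∈ Finset.Icc 1 n, ψ (ω i)) / (n : ℝ)) atTop (𝓝 0) := by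
  have := hP.prob
  obtain ⟨χ, K, hχ, poisson⟩ :=
    exists_lipschitzWith_poisson_solution hπ ha hW hμstar hinv hψ hψ0
  filter_upwards [hP.ae_sum_sub_Pfun_isLittleO hχ.continuous.measurable
    (hx₀.comp_lipschitzWith hχ fun n => (measurable_pi_apply n).aemeasurable)] with ω hω
  simp only [poisson] at hω
  exact tendsto_sum_Icc_div_of_isLittleO hω

/-- The strong law of large numbers: `(1/n) ∑_{i=1}^n ψ(X_i) → 0` `P_μ`-almost surely. -/
theorem slln_for_markov_chain
    {E : Type*} [MeasurableSpace E] [MetricSpace E] [CompleteSpace E]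
    [SecondCountableTopology E] [BorelSpace E]
    (π : Kernel E E) [IsMarkovKernel π] (γ c : ℝ) (hγ : γ ∈ Set.Ioo (0 : ℝ) 1) (hc : 0 < c)
    -- (H0): the Feller property
    (hH0 : ∀ f : E → ℝ, Continuous f → IsBounded (Set.range f) → Continuous (Pfun π f))
    -- (H1): `P` preserves `M_{1,1}`
    (hH1 : ∀ ν : MeasureTheory.Measure E, FiniteFirstMoment ν → FiniteFirstMoment (Pmeas π ν))
    -- (H2): spectral gap in the Wasserstein metric
    (hH2 : ∀ n : ℕ, 1 ≤ n → ∀ ν₁ ν₂ : MeasureTheory.Measure E, FiniteFirstMoment ν₁ →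
      FiniteFirstMoment ν₂ →
      wassDist ((Pmeas π)^[n] ν₁) ((Pmeas π)^[n] ν₂) ≤ c * γ ^ n * wassDist ν₁ ν₂)
    -- the chain: initial distribution `μ ∈ M_{1,1}` and its law `Pμ` on `E^ℕ`
    (μ : MeasureTheory.Measure E) (hμ : FiniteFirstMoment μ)
    (Pμ : MeasureTheory.Measure (ℕ → E)) (hPμ : IsMarkovChainLaw π μ Pμ)
    -- (H3): uniformly bounded moments of order `2 + δ`
    (x₀ : E) (δ : ℝ) (hδ : 0 < δ)
    (hH3int : ∀ n : ℕ, Integrable (fun ω : ℕ → E => dist x₀ (ω n) ^ (2 + δ)) Pμ)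
    (hH3 : ∃ M : ℝ, ∀ n : ℕ, ∫ ω : ℕ → E, dist x₀ (ω n) ^ (2 + δ) ∂Pμ ≤ M)
    -- the unique invariant measure `μ* ∈ M_{1,1}`
    (μstar : MeasureTheory.Measure E) (hμstar : FiniteFirstMoment μstar)
    (hinv : Pmeas π μstar = μstar)
    (huniq : ∀ ν : MeasureTheory.Measure E, IsProbabilityMeasure ν → Pmeas π ν = ν → ν = μstar)
    -- `ψ` is Lipschitz with `⟨ψ, μ*⟩ = 0`
    (ψ : E → ℝ) (Lψ : ℝ≥0) (hψ : LipschitzWith Lψ ψ) (hψ0 : ∫ x, ψ x ∂μstar = 0) :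
    ∀ᵐ ω ∂Pμ, Tendsto
      (fun n : ℕ => (∑ i ∈ Finset.Icc 1 n, ψ (ω i)) / (n : ℝ)) atTop (𝓝 0) := by
  have := hPμ.prob
  lift c to ℝ≥0 using hc.le
  lift γ to ℝ≥0 using hγ.1.le
  exact slln_for_markov_chain_general π hH1 ((NNReal.summable_geometric hγ.2).mul_left c)
    (by exact_mod_cast hH2) hPμ
    (isL2Bounded_of_integral_rpow_le (by linarith) (fun _ _ => dist_nonneg) hH3int hH3)
    hμstar hinv hψ hψ0
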